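/- Let x be a uniformly recurrent sequence over a finite alphabet A, u a nonempty prefix of x, v a nonempty prefix of the derived sequence D_u(x), and set w = Θ_{x,u}(v)·u. Then: (i) w is a prefix of x; (ii) Θ_{x,u} ∘ Θ_{D_u(x),v} = Θ_{x,w}; and (iii) D_v(D_u(x)) = D_w(x). -/

import Mathlib

/-!
Write `y = D_u(x)` and let `p n` be the position of the `n`-th occurrence of `u` in `x`, so that
the factor of `x` between `p n` and `p (n + k)` is the image under `Θ_{x,u}` of the factor of
length `k` of `y` at `n` (`theta_factorAt`).

The main point is synchronization (`occSeq_sync`): a factor of `x` that begins and ends with an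
occurrence of `u` determines the occurrences of `u` inside it, hence its decomposition into return
words and the corresponding factor of `y`. This has two consequences.

* The word `w = Θ_{x,u}(v)u` occurs in `x` exactly at the positions `p n` where `v` occurs in `y` at
  `n` (`occursAt_theta_append_iff`). Hence the `n`-th occurrence of `w` in `x` is
  `p (q n)`, with `q n` the `n`-th occurrence of `v` in `y`, and the `n`-th return word to `w` is the
  image under `Θ_{x,u}` of the `n`-th return word to `v`.
* Two return words to `v` in `y` with the same image under `Θ_{x,u}` coincide
  (`retWord_eq_of_theta_eq`), since those images are followed by `u` in `x`.

The labelling in a derived sequence depends only on which indices `n`, `m` carry equal return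
words (`derivedSeq_congr`), so both derived sequences are equal, and the identity of morphisms
follows letter by letter.
-/

namespace Rauzy

variable {A B Γ : Type*}

/-- The factor `x_[i, i+n)` of length `n` of the sequence `x`, starting at position `i`. -/
def factorAt (x : ℕ → A) (i n : ℕ) : List A :=
  (List.range n).map fun k => x (i + k)

/-- The word `w` occurs in the sequence `x` at position `i`. -/
def OccursAt (x : ℕ → A) (w : List A) (i : ℕ) : Prop :=
  factorAt x i w.length = w

/-- The word `w` is a factor of the sequence `x`. -/
def IsFactor (x : ℕ → A) (w : List A) : Prop :=
  ∃ i, OccursAt x w i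

/-- The word `w` is a prefix of the sequence `x`. -/
def IsPrefixSeq (x : ℕ → A) (w : List A) : Prop :=
  OccursAt x w 0

/-- The sequence `x` is uniformly recurrent: every factor occurs with bounded gaps. -/
def UniformlyRecurrent (x : ℕ → A) : Prop :=
  ∀ w : List A, IsFactor x w → ∃ N, ∀ i, ∃ j, i ≤ j ∧ j < i + N ∧ OccursAt x w j

/-- `i < j` are two successive occurrences of `u` in `x`. -/
def SuccessiveOccs (x : ℕ → A) (u : List A) (i j : ℕ) : Prop :=
  i < j ∧ OccursAt x u i ∧ OccursAt x u j ∧ ∀ k, i < k → k < j → ¬ OccursAt x u k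

/-- The word `w` is a return word to `u` in `x`. -/
def IsReturnWord (x : ℕ → A) (u w : List A) : Prop :=
  ∃ i j, SuccessiveOccs x u i j ∧ w = factorAt x i (j - i)

/-- The set `ℛ_{x,u}` of return words to `u` in `x`. -/
def returnWords (x : ℕ → A) (u : List A) : Set (List A) :=
  {w | IsReturnWord x u w}

/-- The next occurrence of `u` in `x` strictly after position `i`. -/
noncomputable def nextOcc (x : ℕ → A) (u : List A) (i : ℕ) : ℕ :=
  sInf {j | i < j ∧ OccursAt x u j}

/-- The increasing enumeration of the occurrences of the prefix `u` in `x`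
(position `0` is an occurrence since `u` is a prefix). -/
noncomputable def occSeq (x : ℕ → A) (u : List A) : ℕ → ℕ
  | 0 => 0
  | n + 1 => nextOcc x u (occSeq x u n)

/-- The `n`-th return word `mₙ` in the decomposition `x = m₀m₁m₂⋯` of `x`
into return words to the prefix `u`. -/
noncomputable def retWord (x : ℕ → A) (u : List A) (n : ℕ) : List A :=
  factorAt x (occSeq x u n) (occSeq x u (n + 1) - occSeq x u n)

/-- The first index `n` such that `mₙ = w` in the decomposition of `x` into
return words to `u`. -/
noncomputable def firstIdx (x : ℕ → A) (u w : List A) : ℕ :=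
  sInf {n | retWord x u n = w}

open Classical in
/-- The derived sequence `D_u(x)` of `x` on the prefix `u`, with the return words
labelled `0, 1, 2, …` in the order of their first appearance in the decomposition
`x = m₀m₁m₂⋯` : the label of `mₙ` is the number of distinct return words appearing
strictly before the first occurrence of `mₙ`. -/
noncomputable def derivedSeq (x : ℕ → A) (u : List A) (n : ℕ) : ℕ :=
  ((Finset.range (firstIdx x u (retWord x u n))).image (retWord x u)).card

/-- The alphabet `R_{x,u} = {0, …, #ℛ_{x,u} - 1} ⊆ ℕ` of the derived sequence. -/
def derivedAlphabet (x : ℕ → A) (u : List A) : Set ℕ :=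
  Set.range (derivedSeq x u)

/-- The morphism `Θ_{x,u}` on letters: the return word labelled `k`. -/
noncomputable def thetaLetter (x : ℕ → A) (u : List A) (k : ℕ) : List A :=
  retWord x u (sInf {n | derivedSeq x u n = k})

/-- The canonical extension of a letter-to-word map to a monoid morphism on words. -/
def apply (f : A → List B) (w : List A) : List B :=
  (w.map f).flatten

/-- The morphism `Θ_{x,u} : R_{x,u}* → A*` on words. -/
noncomputable def theta (x : ℕ → A) (u : List A) (l : List ℕ) : List A :=
  apply (thetaLetter x u) l

/-- `y = f(x)` for an infinite sequence `x`: the image under `f` of every prefix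
of `x` is a prefix of `y`. -/
def SeqImage (f : A → List B) (x : ℕ → A) (y : ℕ → B) : Prop :=
  ∀ n, IsPrefixSeq y (apply f (factorAt x 0 n))

/-- The iterate `σⁿ` of a substitution, on letters. -/
def substIter (σ : A → List A) : ℕ → A → List A
  | 0 => fun a => [a]
  | n + 1 => fun a => apply σ (substIter σ n a)

/-- `σ` is prolongable on the letter `a`: `σ(a) = a·w` with `w` nonempty, and
`|σⁿ(a)| → ∞`. -/
def Prolongable (σ : A → List A) (a : A) : Prop :=
  (∃ w : List A, w ≠ [] ∧ σ a = a :: w) ∧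
    Filter.Tendsto (fun n => (substIter σ n a).length) Filter.atTop Filter.atTop

/-- The incidence matrix of a substitution: entry `(i, j)` is the number of
occurrences of the letter `i` in `σ(j)`. -/
def incMatrix [Fintype A] [DecidableEq A] (σ : A → List A) : Matrix A A ℕ :=
  Matrix.of fun i j => (σ j).count i

/-- A substitution is primitive if some power of its incidence matrix has all
entries strictly positive. -/
def Primitive [Fintype A] [DecidableEq A] (σ : A → List A) : Prop :=
  ∃ k, 0 < k ∧ ∀ i j, 0 < (incMatrix σ ^ k) i j

/-- The sequence `x` is (purely) periodic. -/
def IsPeriodic (x : ℕ → A) : Prop :=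
  ∃ p, 0 < p ∧ ∀ n, x (n + p) = x n

/-- The sequence `x` is ultimately periodic. -/
def IsUltimatelyPeriodic (x : ℕ → A) : Prop :=
  ∃ N p, 0 < p ∧ ∀ n, N ≤ n → x (n + p) = x n

/-- `|σ| = max_{a ∈ A} |σ(a)|`. -/
def mSize [Fintype A] (σ : A → List A) : ℕ :=
  Finset.univ.sup fun a => (σ a).length

/-- `min_{a ∈ A} |σ(a)|`. -/
noncomputable def minSize [Fintype A] [Nonempty A] (σ : A → List A) : ℕ :=
  Finset.univ.inf' Finset.univ_nonempty fun a => (σ a).length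

/-- `R_σ`: the maximal difference between two successive occurrences of a word of
length 2 in any fixed point of `σ`. -/
noncomputable def Rconst (σ : A → List A) : ℕ :=
  sSup {r | ∃ x : ℕ → A, SeqImage σ x x ∧
    ∃ w i j, w.length = 2 ∧ SuccessiveOccs x w i j ∧ r = j - i}

/-- `Q_σ = max( max_{0 ≤ n ≤ (d−1)d^d + 1} |σⁿ| / min_{a∈A} |σⁿ(a)| , |σ| )`. -/
noncomputable def Qconst [Fintype A] [Nonempty A] (σ : A → List A) : ℝ :=
  max
    ((Finset.range ((Fintype.card A - 1) * Fintype.card A ^ Fintype.card A + 2)).sup'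
      (Finset.nonempty_range_iff.mpr (by omega))
      fun n => (mSize (substIter σ n) : ℝ) / (minSize (substIter σ n) : ℝ))
    (mSize σ : ℝ)

/-- `K_σ = Q_σ · R_σ · |σ|`. -/
noncomputable def Kconst [Fintype A] [Nonempty A] (σ : A → List A) : ℝ :=
  Qconst σ * Rconst σ * mSize σ

/-- The index `m` such that `occSeq x u m = L`, i.e. the number of complete return
words to `u` composing the prefix of length `L` of `x`. -/
noncomputable def posIdx (x : ℕ → A) (u : List A) (L : ℕ) : ℕ :=
  sInf {m | occSeq x u m = L}

/-- The return substitution `σ_u : R_{x,u}* → R_{x,u}*`, on letters: it is the unique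
substitution satisfying `Θ_{x,u} ∘ σ_u = σ ∘ Θ_{x,u}`. -/
noncomputable def returnSubst (σ : A → List A) (x : ℕ → A) (u : List A) (k : ℕ) : List ℕ :=
  let n := sInf {n | derivedSeq x u n = k}
  let p := posIdx x u (apply σ (factorAt x 0 (occSeq x u n))).length
  let q := posIdx x u (apply σ (factorAt x 0 (occSeq x u (n + 1)))).length
  (List.range (q - p)).map fun t => derivedSeq x u (p + t)

/-- For a coding `φ`, the morphism `λ_u : R_{x,u}* → R_{φ(x),φ(u)}*`, on letters:
it is the unique morphism satisfying `φ ∘ Θ_{x,u} = Θ_{φ(x),φ(u)} ∘ λ_u`. -/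
noncomputable def lambdaMorph (φ : A → B) (x : ℕ → A) (u : List A) (k : ℕ) : List ℕ :=
  let n := sInf {n | derivedSeq x u n = k}
  let p := posIdx (fun i => φ (x i)) (u.map φ) (occSeq x u n)
  let q := posIdx (fun i => φ (x i)) (u.map φ) (occSeq x u (n + 1))
  (List.range (q - p)).map fun t => derivedSeq (fun i => φ (x i)) (u.map φ) (p + t)

/-- The Parikh vector (abelianization) of a word. -/
def parikh [DecidableEq A] (w : List A) : A → ℤ :=
  fun b => (w.count b : ℤ)


/-! ### Factors and occurrences -/

@[simp] lemma length_factorAt (x : ℕ → A) (i n : ℕ) : (factorAt x i n).length = n := by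
  simp [factorAt]

lemma factorAt_eq_iff (x y : ℕ → A) (i j n : ℕ) :
    factorAt x i n = factorAt y j n ↔ ∀ t < n, x (i + t) = y (j + t) := by
  simp [factorAt, List.map_inj_left]

lemma factorAt_add (x : ℕ → A) (i a b : ℕ) :
    factorAt x i (a + b) = factorAt x i a ++ factorAt x (i + a) b := by
  simp [factorAt, List.range_add, Function.comp_def, add_assoc]

lemma occursAt_iff {x : ℕ → A} {u : List A} (hp : IsPrefixSeq x u) (i : ℕ) :
    OccursAt x u i ↔ ∀ t < u.length, x (i + t) = x t := by
  have h : factorAt x 0 u.length = u := hp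
  unfold OccursAt
  conv_lhs => rhs; rw [← h]
  simp [factorAt_eq_iff]

/-! ### The enumeration of the occurrences of a prefix -/

lemma nextOcc_spec {x : ℕ → A} {u : List A} (hinf : ∀ i, ∃ j, i < j ∧ OccursAt x u j) (i : ℕ) :
    i < nextOcc x u i ∧ OccursAt x u (nextOcc x u i) :=
  Nat.sInf_mem (s := {j | i < j ∧ OccursAt x u j}) (hinf i)

lemma nextOcc_le {x : ℕ → A} {u : List A} {i j : ℕ} (hij : i < j) (hj : OccursAt x u j) :
    nextOcc x u i ≤ j :=
  Nat.sInf_le ⟨hij, hj⟩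

lemma UniformlyRecurrent.exists_occ {x : ℕ → A} {u : List A} (hrec : UniformlyRecurrent x)
    (hp : IsPrefixSeq x u) (i : ℕ) : ∃ j, i < j ∧ OccursAt x u j := by
  obtain ⟨N, hN⟩ := hrec u ⟨0, hp⟩
  obtain ⟨j, h1, -, h2⟩ := hN (i + 1)
  exact ⟨j, h1, h2⟩

lemma occSeq_strictMono {x : ℕ → A} {u : List A} (hinf : ∀ i, ∃ j, i < j ∧ OccursAt x u j) :
    StrictMono (occSeq x u) :=
  strictMono_nat_of_lt_succ fun n => (nextOcc_spec hinf (occSeq x u n)).1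

lemma occursAt_occSeq {x : ℕ → A} {u : List A} (hp : IsPrefixSeq x u)
    (hinf : ∀ i, ∃ j, i < j ∧ OccursAt x u j) : ∀ n, OccursAt x u (occSeq x u n)
  | 0 => hp
  | n + 1 => (nextOcc_spec hinf (occSeq x u n)).2

lemma exists_occSeq_eq {x : ℕ → A} {u : List A} (hinf : ∀ i, ∃ j, i < j ∧ OccursAt x u j)
    {i : ℕ} (hi : OccursAt x u i) : ∃ m, occSeq x u m = i := by
  have key : ∀ n, i ≤ occSeq x u n → ∃ m, occSeq x u m = i := by
    intro n
    induction n with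
    | zero => exact fun h => ⟨0, (Nat.le_zero.mp h).symm⟩
    | succ n ih =>
      intro h
      by_cases hn : i ≤ occSeq x u n
      · exact ih hn
      · exact ⟨n + 1, le_antisymm (nextOcc_le (not_le.mp hn) hi) h⟩
  exact key i ((occSeq_strictMono hinf).le_apply)

/-- Synchronization: if `x` has the same letters after the `n`-th and the `m`-th occurrence of
`u`, up to and including the `(n + k)`-th occurrence of `u`, then the next `k` occurrences of `u`
are at the same relative positions. -/
lemma occSeq_sync {x : ℕ → A} {u : List A} (hp : IsPrefixSeq x u)
    (hinf : ∀ i, ∃ j, i < j ∧ OccursAt x u j) {n m k L : ℕ}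
    (hL : occSeq x u (n + k) = occSeq x u n + L)
    (hag : ∀ t < L + u.length, x (occSeq x u n + t) = x (occSeq x u m + t)) :
    ∀ j ≤ k, occSeq x u (m + j) + occSeq x u n = occSeq x u m + occSeq x u (n + j) := by
  have hmono := occSeq_strictMono hinf
  have htr : ∀ d ≤ L, OccursAt x u (occSeq x u n + d) ↔ OccursAt x u (occSeq x u m + d) := by
    intro d hd
    rw [occursAt_iff hp, occursAt_iff hp]
    refine forall₂_congr fun t ht => ?_
    rw [add_assoc, add_assoc, hag (d + t) (by omega)]
  intro j
  induction j with
  | zero => intro _; simp only [add_zero]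
  | succ j ih =>
    intro hj
    have ih := ih (by omega)
    have h1 : occSeq x u (n + j) < occSeq x u (n + (j + 1)) := hmono (by omega)
    have h2 : occSeq x u (m + j) < occSeq x u (m + (j + 1)) := hmono (by omega)
    have h3 : occSeq x u n ≤ occSeq x u (n + j) := hmono.monotone (by omega)
    have h4 : occSeq x u m ≤ occSeq x u (m + j) := hmono.monotone (by omega)
    have h5 : occSeq x u (n + (j + 1)) ≤ occSeq x u (n + k) := hmono.monotone (by omega)
    obtain ⟨d, hd⟩ : ∃ d, occSeq x u (n + (j + 1)) = occSeq x u n + d :=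
      Nat.exists_eq_add_of_le (by omega)
    obtain ⟨e, he⟩ : ∃ e, occSeq x u (m + (j + 1)) = occSeq x u m + e :=
      Nat.exists_eq_add_of_le (by omega)
    have hed : occSeq x u (m + (j + 1)) ≤ occSeq x u m + d := by
      refine nextOcc_le (i := occSeq x u (m + j)) (by omega) ((htr d (by omega)).1 ?_)
      rw [← hd]
      exact occursAt_occSeq hp hinf _
    have hde : occSeq x u (n + (j + 1)) ≤ occSeq x u n + e := by
      refine nextOcc_le (i := occSeq x u (n + j)) (by omega) ((htr e (by omega)).2 ?_)
      rw [← he]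
      exact occursAt_occSeq hp hinf _
    omega

lemma retWord_sync {x : ℕ → A} {u : List A} (hp : IsPrefixSeq x u)
    (hinf : ∀ i, ∃ j, i < j ∧ OccursAt x u j) {n m k L : ℕ}
    (hL : occSeq x u (n + k) = occSeq x u n + L)
    (hag : ∀ t < L + u.length, x (occSeq x u n + t) = x (occSeq x u m + t)) {j : ℕ}
    (hj : j < k) : retWord x u (n + j) = retWord x u (m + j) := by
  have hmono := occSeq_strictMono hinf
  have h1 := occSeq_sync hp hinf hL hag j hj.le
  have h2 := occSeq_sync hp hinf hL hag (j + 1) hj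
  rw [← add_assoc, ← add_assoc] at h2
  have h3 : occSeq x u n ≤ occSeq x u (n + j) := hmono.monotone (by omega)
  have h5 : occSeq x u (n + j + 1) ≤ occSeq x u (n + k) := hmono.monotone (by omega)
  have hlen : occSeq x u (m + j + 1) - occSeq x u (m + j)
      = occSeq x u (n + j + 1) - occSeq x u (n + j) := by omega
  unfold retWord
  rw [hlen, factorAt_eq_iff]
  intro t ht
  have := hag (occSeq x u (n + j) - occSeq x u n + t) (by omega)
  convert this using 2 <;> omega

/-! ### Labels of return words -/

lemma firstIdx_spec (x : ℕ → A) (u : List A) (n : ℕ) :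
    retWord x u (firstIdx x u (retWord x u n)) = retWord x u n :=
  Nat.sInf_mem (s := {k | retWord x u k = retWord x u n}) ⟨n, rfl⟩

open Classical in
/-- A return word appearing later than another one has a larger label: the other one is counted
in its label only. -/
lemma derivedSeq_lt_of_firstIdx_lt (x : ℕ → A) (u : List A) {n m : ℕ}
    (h : firstIdx x u (retWord x u n) < firstIdx x u (retWord x u m)) :
    derivedSeq x u n < derivedSeq x u m := by
  refine Finset.card_lt_card (Finset.ssubset_iff_of_subset
    (Finset.image_subset_image (Finset.range_mono h.le)) |>.2 ⟨retWord x u n, ?_, ?_⟩)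
  · exact Finset.mem_image.2 ⟨_, Finset.mem_range.2 h, firstIdx_spec x u n⟩
  · intro hmem
    obtain ⟨k, hk, hkn⟩ := Finset.mem_image.1 hmem
    exact absurd (Nat.sInf_le (s := {k | retWord x u k = retWord x u n}) hkn)
      (not_le.2 (Finset.mem_range.1 hk))

lemma derivedSeq_eq_iff (x : ℕ → A) (u : List A) {n m : ℕ} :
    derivedSeq x u n = derivedSeq x u m ↔ retWord x u n = retWord x u m := by
  refine ⟨fun h => ?_, fun h => by simp only [derivedSeq, h]⟩
  rcases lt_trichotomy (firstIdx x u (retWord x u n)) (firstIdx x u (retWord x u m))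
    with hlt | heq | hlt
  · exact absurd h (derivedSeq_lt_of_firstIdx_lt x u hlt).ne
  · rw [← firstIdx_spec x u n, heq, firstIdx_spec]
  · exact absurd h (derivedSeq_lt_of_firstIdx_lt x u hlt).ne'

open Classical in
/-- If the return words to `w` in `x` are the images under `f` of the return words to `v` in `y`,
and `f` identifies no two of the latter, both derived sequences are equal. -/
lemma derivedSeq_congr {x : ℕ → A} {y : ℕ → B} {w : List A} {v : List B} (f : List B → List A)
    (hf : ∀ n, retWord x w n = f (retWord y v n))
    (hinj : ∀ n m, f (retWord y v n) = f (retWord y v m) → retWord y v n = retWord y v m) :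
    derivedSeq y v = derivedSeq x w := by
  funext n
  have hidx : firstIdx x w (retWord x w n) = firstIdx y v (retWord y v n) := by
    unfold firstIdx
    congr 1
    ext k
    simp only [Set.mem_ofPred_eq, hf]
    exact ⟨hinj k n, fun h => by rw [h]⟩
  unfold derivedSeq
  rw [hidx, show retWord x w = f ∘ retWord y v from funext hf, ← Finset.image_image]
  refine (Finset.card_image_of_injOn ?_).symm
  intro a ha b hb hab
  obtain ⟨i, -, rfl⟩ := Finset.mem_image.1 (Finset.mem_coe.1 ha)
  obtain ⟨j, -, rfl⟩ := Finset.mem_image.1 (Finset.mem_coe.1 hb)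
  exact hinj i j hab

lemma thetaLetter_derivedSeq (x : ℕ → A) (u : List A) (n : ℕ) :
    thetaLetter x u (derivedSeq x u n) = retWord x u n :=
  (derivedSeq_eq_iff x u).1
    (Nat.sInf_mem (s := {k | derivedSeq x u k = derivedSeq x u n}) ⟨n, rfl⟩)

/-! ### The morphism `Θ_{x,u}` on factors of the derived sequence -/

lemma theta_factorAt {x : ℕ → A} {u : List A} (hinf : ∀ i, ∃ j, i < j ∧ OccursAt x u j)
    (n k : ℕ) : theta x u (factorAt (derivedSeq x u) n k)
      = factorAt x (occSeq x u n) (occSeq x u (n + k) - occSeq x u n) := by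
  have hmono := occSeq_strictMono hinf
  induction k with
  | zero => simp [theta, apply, factorAt]
  | succ k ih =>
    have h1 : occSeq x u n ≤ occSeq x u (n + k) := hmono.monotone (by omega)
    have h2 : occSeq x u (n + k) < occSeq x u (n + k + 1) := hmono (by omega)
    have hs : theta x u (factorAt (derivedSeq x u) n (k + 1))
        = theta x u (factorAt (derivedSeq x u) n k) ++ retWord x u (n + k) := by
      rw [← thetaLetter_derivedSeq, factorAt_add]
      simp [theta, apply, factorAt]
    rw [hs, ih, retWord, ← add_assoc,
      show occSeq x u (n + k + 1) - occSeq x u n = (occSeq x u (n + k) - occSeq x u n)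
        + (occSeq x u (n + k + 1) - occSeq x u (n + k)) by omega, factorAt_add,
      show occSeq x u n + (occSeq x u (n + k) - occSeq x u n) = occSeq x u (n + k) by omega]

lemma theta_append_occursAt {x : ℕ → A} {u : List A} {v : List ℕ} (hp : IsPrefixSeq x u)
    (hinf : ∀ i, ∃ j, i < j ∧ OccursAt x u j) {n : ℕ} (hn : OccursAt (derivedSeq x u) v n) :
    OccursAt x (theta x u v ++ u) (occSeq x u n) := by
  have hmono := occSeq_strictMono hinf
  have h := theta_factorAt hinf n v.length
  rw [show factorAt (derivedSeq x u) n v.length = v from hn] at h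
  have h1 : occSeq x u n ≤ occSeq x u (n + v.length) := hmono.monotone (by omega)
  have hu : factorAt x (occSeq x u (n + v.length)) u.length = u := occursAt_occSeq hp hinf _
  unfold OccursAt
  rw [List.length_append, factorAt_add, h, length_factorAt,
    show occSeq x u n + (occSeq x u (n + v.length) - occSeq x u n)
      = occSeq x u (n + v.length) by omega, hu]

lemma length_theta {x : ℕ → A} {u : List A} {v : List ℕ}
    (hinf : ∀ i, ∃ j, i < j ∧ OccursAt x u j) (hv : IsPrefixSeq (derivedSeq x u) v) :
    (theta x u v).length = occSeq x u v.length := by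
  have h := theta_factorAt hinf 0 v.length
  rw [show factorAt (derivedSeq x u) 0 v.length = v from hv] at h
  simp [h, occSeq]

/-- The occurrences of `w = Θ_{x,u}(v)u` in `x` are the positions of those occurrences of `u`
that correspond to an occurrence of `v` in the derived sequence. -/
lemma occursAt_theta_append_iff {x : ℕ → A} {u : List A} {v : List ℕ} (hp : IsPrefixSeq x u)
    (hinf : ∀ i, ∃ j, i < j ∧ OccursAt x u j) (hv : IsPrefixSeq (derivedSeq x u) v) (i : ℕ) :
    OccursAt x (theta x u v ++ u) i ↔ ∃ n, occSeq x u n = i ∧ OccursAt (derivedSeq x u) v n := by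
  refine ⟨fun hi => ?_, ?_⟩
  · have hpw : IsPrefixSeq x (theta x u v ++ u) := theta_append_occursAt hp hinf hv
    rw [occursAt_iff hpw, List.length_append, length_theta hinf hv] at hi
    -- Both `u` and `w` are prefixes of `x` and `w` is the longer one, so `u` occurs wherever `w` does.
    obtain ⟨n, rfl⟩ := exists_occSeq_eq hinf
      ((occursAt_iff hp i).2 fun t ht => hi t (by omega))
    refine ⟨n, rfl, (occursAt_iff hv n).2 fun t ht => ?_⟩
    have := retWord_sync hp hinf (n := 0) (m := n) (k := v.length)
      (L := occSeq x u v.length) (by simp [occSeq])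
      (fun s hs => by simpa [occSeq] using (hi s hs).symm) ht
    rw [zero_add] at this
    exact (derivedSeq_eq_iff x u).2 this.symm
  · rintro ⟨n, rfl, hn⟩
    exact theta_append_occursAt hp hinf hn

/-- `Θ_{x,u}` is injective on the return words to `v`. Their images are followed by `u` in `x`,
which is what makes `occSeq_sync` apply. -/
lemma retWord_eq_of_theta_eq {x : ℕ → A} {u : List A} {v : List ℕ} (hp : IsPrefixSeq x u)
    (hinf : ∀ i, ∃ j, i < j ∧ OccursAt x u j)
    (hinfv : ∀ i, ∃ j, i < j ∧ OccursAt (derivedSeq x u) v j) {n m : ℕ}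
    (h : theta x u (retWord (derivedSeq x u) v n) = theta x u (retWord (derivedSeq x u) v m)) :
    retWord (derivedSeq x u) v n = retWord (derivedSeq x u) v m := by
  have hmono := occSeq_strictMono hinf
  have hq := occSeq_strictMono hinfv
  set y := derivedSeq x u with hy
  set q := occSeq y v with hqdef
  have hn : q n < q (n + 1) := hq (by omega)
  have hm : q m < q (m + 1) := hq (by omega)
  have hpn : occSeq x u (q n) < occSeq x u (q (n + 1)) := hmono hn
  have hpm : occSeq x u (q m) < occSeq x u (q (m + 1)) := hmono hm
  unfold retWord at h
  rw [theta_factorAt hinf, theta_factorAt hinf, ← hqdef,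
    Nat.add_sub_cancel' hn.le, Nat.add_sub_cancel' hm.le] at h
  obtain ⟨L, hL⟩ := Nat.exists_eq_add_of_le hpn.le
  obtain ⟨L', hL'⟩ := Nat.exists_eq_add_of_le hpm.le
  have hLL : L = L' := by
    have := congrArg List.length h
    simp only [length_factorAt] at this
    omega
  subst hLL
  rw [hL, hL', Nat.add_sub_cancel_left, Nat.add_sub_cancel_left, factorAt_eq_iff] at h
  have hag : ∀ t < L + u.length, x (occSeq x u (q n) + t) = x (occSeq x u (q m) + t) := by
    intro t ht
    by_cases htL : t < L
    · exact h t htL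
    · obtain ⟨s, rfl⟩ := Nat.exists_eq_add_of_le (not_lt.1 htL)
      rw [← add_assoc, ← add_assoc, ← hL, ← hL',
        (occursAt_iff hp _).1 (occursAt_occSeq hp hinf (q (n + 1))) s (by omega),
        (occursAt_iff hp _).1 (occursAt_occSeq hp hinf (q (m + 1))) s (by omega)]
  obtain ⟨k, hk⟩ := Nat.exists_eq_add_of_le hn.le
  rw [hk] at hL
  have hmk : q (m + 1) = q m + k := by
    have := occSeq_sync hp hinf hL hag k le_rfl
    exact hmono.injective (by omega)
  unfold retWord
  rw [← hqdef, hk, hmk, Nat.add_sub_cancel_left, Nat.add_sub_cancel_left, factorAt_eq_iff]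
  exact fun t ht => (derivedSeq_eq_iff x u).2 (retWord_sync hp hinf hL hag ht)

lemma occSeq_theta_append {x : ℕ → A} {u : List A} {v : List ℕ} (hp : IsPrefixSeq x u)
    (hinf : ∀ i, ∃ j, i < j ∧ OccursAt x u j) (hv : IsPrefixSeq (derivedSeq x u) v)
    (hinfv : ∀ i, ∃ j, i < j ∧ OccursAt (derivedSeq x u) v j)
    (hinfw : ∀ i, ∃ j, i < j ∧ OccursAt x (theta x u v ++ u) j) (n : ℕ) :
    occSeq x (theta x u v ++ u) n = occSeq x u (occSeq (derivedSeq x u) v n) := by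
  have hmono := occSeq_strictMono hinf
  induction n with
  | zero => rfl
  | succ n ih =>
    change nextOcc _ _ _ = occSeq x u (nextOcc _ _ _)
    rw [ih]
    apply le_antisymm
    · obtain ⟨h1, h2⟩ := nextOcc_spec hinfv (occSeq (derivedSeq x u) v n)
      exact nextOcc_le (hmono h1) (theta_append_occursAt hp hinf h2)
    · obtain ⟨h1, h2⟩ := nextOcc_spec hinfw (occSeq x u (occSeq (derivedSeq x u) v n))
      obtain ⟨k, hk, hkv⟩ := (occursAt_theta_append_iff hp hinf hv _).1 h2
      rw [← hk] at h1 ⊢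
      exact hmono.monotone (nextOcc_le (hmono.lt_iff_lt.1 h1) hkv)

/-- For a uniformly recurrent sequence `x`, a nonempty prefix `u` of `x`
and a nonempty prefix `v` of the derived sequence `D_u(x)`, setting
`w = Θ_{x,u}(v)·u` one has: (i) `w` is a prefix of `x`;
(ii) `Θ_{x,u} ∘ Θ_{D_u(x),v} = Θ_{x,w}` (in particular the two morphisms have the
same domain alphabet); and (iii) `D_v(D_u(x)) = D_w(x)`. -/
theorem derived_sequence_composition {A : Type*} (x : ℕ → A) (u : List A) (v : List ℕ)
    (hrec : UniformlyRecurrent x) (hu : u ≠ []) (hpu : IsPrefixSeq x u)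
    (hv : v ≠ []) (hpv : IsPrefixSeq (derivedSeq x u) v) :
    IsPrefixSeq x (theta x u v ++ u) ∧
    (derivedAlphabet (derivedSeq x u) v = derivedAlphabet x (theta x u v ++ u) ∧
      ∀ k ∈ derivedAlphabet (derivedSeq x u) v,
        theta x u (thetaLetter (derivedSeq x u) v k) =
          thetaLetter x (theta x u v ++ u) k) ∧
    derivedSeq (derivedSeq x u) v = derivedSeq x (theta x u v ++ u) := by
  have hinf := hrec.exists_occ hpu
  have hpw : IsPrefixSeq x (theta x u v ++ u) := theta_append_occursAt hpu hinf hpv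
  have hinfw := hrec.exists_occ hpw
  have hmono := occSeq_strictMono hinf
  have hinfv : ∀ i, ∃ j, i < j ∧ OccursAt (derivedSeq x u) v j := by
    intro i
    obtain ⟨j, hij, hj⟩ := hinfw (occSeq x u i)
    obtain ⟨k, rfl, hk⟩ := (occursAt_theta_append_iff hpu hinf hpv j).1 hj
    exact ⟨k, hmono.lt_iff_lt.1 hij, hk⟩
  have hret : ∀ n, retWord x (theta x u v ++ u) n
      = theta x u (retWord (derivedSeq x u) v n) := by
    intro n
    have hq := occSeq_strictMono hinfv (Nat.lt_succ_self n)
    unfold retWord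
    rw [theta_factorAt hinf, Nat.add_sub_cancel' hq.le,
      occSeq_theta_append hpu hinf hpv hinfv hinfw, occSeq_theta_append hpu hinf hpv hinfv hinfw]
  have hder : derivedSeq (derivedSeq x u) v = derivedSeq x (theta x u v ++ u) :=
    derivedSeq_congr (theta x u) hret fun n m => retWord_eq_of_theta_eq hpu hinf hinfv
  refine ⟨hpw, ⟨by rw [derivedAlphabet, hder, derivedAlphabet], fun k _ => ?_⟩, hder⟩
  rw [thetaLetter, thetaLetter, hret, hder]
end Rauzy
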